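/- Define Y(x) = (1/5)·∫₀¹ (1−t)^{−4/5}(1−xt)^{−3/5} dt for real x < 1 (real powers of positive reals). Then Y(0) = 1, Y is differentiable on (−∞, 1), and for every x < 1 one has 5x(1−x)·Y'(x) + (1−3x)·Y(x) = 1. -/

import Mathlib

open intervalIntegral

/-- The special hypergeometric function `Y(x) = ₂F₁(3/5, 1; 6/5; x)`, given as the integral
`Y(x) = (1/5)·∫₀¹ (1-t)^{-4/5}(1-xt)^{-3/5} dt`. -/
noncomputable def Yfun (x : ℝ) : ℝ :=
  (1 / 5) * ∫ t in (0 : ℝ)..1, (1 - t) ^ (-(4 : ℝ) / 5) * (1 - x * t) ^ (-(3 : ℝ) / 5)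

/-!
The integrand `(1-t)^{s-1} (1-xt)^{-a}` of Euler's integral and its derivative in `x` combine, with
coefficients `s - ax` and `x(1-x)`, to the `t`-derivative of `-(1-t)^s (1-xt)^{-a}`, which increases
by exactly `1` from `t = 0` to `t = 1`. Integrating over `[0, 1]` gives the first-order equation,
and the value at `x = 0` is read off from the equation itself. Here `Y` is the case `a = 3/5`,
`s = 1/5`.
-/

open Set Topology
open MeasureTheory (Measure volume)

section ParametricIntegral

variable {𝕜 E : Type*} [RCLike 𝕜] [NormedAddCommGroup E] [NormedSpace ℝ E] [NormedSpace 𝕜 E]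
  {μ : Measure ℝ} {a b : ℝ} {w : ℝ → 𝕜} {k k' : 𝕜 → ℝ → E} {U : Set 𝕜} {x₀ : 𝕜}

theorem hasDerivAt_integral_smul_of_continuousOn (hw : IntervalIntegrable w μ a b)
    (hU : U ∈ 𝓝 x₀) (hk : ∀ x ∈ U, ContinuousOn (k x) (uIcc a b))
    (hk' : ContinuousOn (Function.uncurry k') (U ×ˢ uIcc a b))
    (hderiv : ∀ x ∈ U, ∀ t ∈ uIcc a b, HasDerivAt (fun y => k y t) (k' x t) x) :
    HasDerivAt (fun x => ∫ t in a..b, w t • k x t ∂μ) (∫ t in a..b, w t • k' x₀ t ∂μ) x₀ := by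
  obtain ⟨K, hK, hKU, hKc⟩ := local_compact_nhds hU
  obtain ⟨C, hC⟩ : ∃ C, ∀ z ∈ K ×ˢ uIcc a b, ‖Function.uncurry k' z‖ ≤ C :=
    (hKc.prod isCompact_uIcc).exists_bound_of_continuousOn (hk'.mono (prod_mono_left hKU))
  have hInt : ∀ x ∈ U, IntervalIntegrable (fun t => w t • k x t) μ a b := fun x hx =>
    hw.smul_continuousOn (hk x hx)
  have hInt' : IntervalIntegrable (fun t => w t • k' x₀ t) μ a b :=
    hw.smul_continuousOn (hk'.uncurry_left x₀ (mem_of_mem_nhds hU))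
  refine (intervalIntegral.hasDerivAt_integral_of_dominated_loc_of_deriv_le
    (F' := fun x t => w t • k' x t) (bound := fun t => ‖w t‖ * C) hK ?_
    (hInt x₀ (mem_of_mem_nhds hU)) hInt'.aestronglyMeasurable_restrict_uIoc ?_
    (hw.norm.mul_const C) ?_).2
  · filter_upwards [hU] with x hx using (hInt x hx).aestronglyMeasurable_restrict_uIoc
  · refine .of_forall fun t ht x hx => ?_
    rw [norm_smul]
    gcongr
    exact hC (x, t) ⟨hx, uIoc_subset_uIcc ht⟩
  · exact .of_forall fun t ht x hx =>
      (hderiv x (hKU hx) t (uIoc_subset_uIcc ht)).const_smul (w t)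

end ParametricIntegral

section Kernel

theorem one_sub_mul_pos {x t : ℝ} (hx : x < 1) (ht : t ∈ Icc (0 : ℝ) 1) : 0 < 1 - x * t := by
  rcases le_or_gt x 0 with h | h <;> nlinarith [ht.1, ht.2]

theorem continuousOn_one_sub_mul_rpow (p : ℝ) :
    ContinuousOn (fun z : ℝ × ℝ => (1 - z.1 * z.2) ^ p) (Iio 1 ×ˢ Icc 0 1) :=
  .rpow_const (by fun_prop) fun _ hz => .inl (one_sub_mul_pos hz.1 hz.2).ne'

theorem continuousOn_one_sub_const_mul_rpow {x : ℝ} (hx : x < 1) (p : ℝ) :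
    ContinuousOn (fun t => (1 - x * t) ^ p) (Icc 0 1) :=
  (continuousOn_one_sub_mul_rpow p).uncurry_left (f := fun x t => (1 - x * t) ^ p) x hx

theorem hasDerivAt_one_sub_mul_rpow (a : ℝ) {x t : ℝ} (h : 1 - x * t ≠ 0) :
    HasDerivAt (fun y => (1 - y * t) ^ (-a)) (a * t * (1 - x * t) ^ (-a - 1)) x := by
  have hlin : HasDerivAt (fun y => 1 - y * t) (-t) x := by
    simpa using (hasDerivAt_mul_const t).const_sub 1
  exact (hlin.rpow_const (.inl h)).congr_deriv (by ring)

theorem intervalIntegrable_one_sub_rpow {r : ℝ} (hr : -1 < r) :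
    IntervalIntegrable (fun t : ℝ => (1 - t) ^ r) volume 0 1 := by
  simpa using ((intervalIntegrable_rpow' hr (a := 0) (b := 1)).comp_sub_left 1).symm

theorem intervalIntegrable_mul_one_sub_mul_rpow {w : ℝ → ℝ}
    (hw : IntervalIntegrable w volume 0 1) {x : ℝ} (hx : x < 1) (p : ℝ) :
    IntervalIntegrable (fun t => w t * (1 - x * t) ^ p) volume 0 1 := by
  refine hw.mul_continuousOn ?_
  rw [uIcc_of_le zero_le_one]
  exact continuousOn_one_sub_const_mul_rpow hx p

theorem hasDerivAt_integral_mul_one_sub_mul_rpow {w : ℝ → ℝ}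
    (hw : IntervalIntegrable w volume 0 1) {x : ℝ} (hx : x < 1) (a : ℝ) :
    HasDerivAt (fun y => ∫ t in (0 : ℝ)..1, w t * (1 - y * t) ^ (-a))
      (∫ t in (0 : ℝ)..1, w t * (a * t * (1 - x * t) ^ (-a - 1))) x := by
  refine hasDerivAt_integral_smul_of_continuousOn (U := Iio 1)
    (k' := fun x t => a * t * (1 - x * t) ^ (-a - 1)) hw (Iio_mem_nhds hx) ?_ ?_ ?_ <;>
    rw [uIcc_of_le zero_le_one]
  · exact fun y hy => continuousOn_one_sub_const_mul_rpow hy (-a)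
  · exact ContinuousOn.mul (f := fun z : ℝ × ℝ => a * z.2) (by fun_prop)
      (continuousOn_one_sub_mul_rpow (-a - 1))
  · exact fun y hy t ht => hasDerivAt_one_sub_mul_rpow a (one_sub_mul_pos hy ht).ne'

end Kernel

/-- Euler's integral for `₂F₁(a, 1; s + 1; x)`. The third parameter is encoded as `s + 1`, so that
the Beta factor `Γ(s + 1) / (Γ(1) Γ(s))` in front of the integral is `s`. -/
noncomputable def eulerIntegral (a s x : ℝ) : ℝ :=
  s * ∫ t in (0 : ℝ)..1, (1 - t) ^ (s - 1) * (1 - x * t) ^ (-a)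

theorem Yfun_eq_eulerIntegral : Yfun = eulerIntegral (3 / 5) (1 / 5) := by
  ext x
  norm_num [Yfun, eulerIntegral]

section EulerIntegral

variable {a s x : ℝ}

theorem hasDerivAt_eulerIntegral (hs : 0 < s) (hx : x < 1) :
    HasDerivAt (eulerIntegral a s)
      (s * ∫ t in (0 : ℝ)..1, (1 - t) ^ (s - 1) * (a * t * (1 - x * t) ^ (-a - 1))) x :=
  (hasDerivAt_integral_mul_one_sub_mul_rpow
    (intervalIntegrable_one_sub_rpow (by linarith)) hx a).const_mul s

theorem hasDerivAt_neg_one_sub_rpow_mul_one_sub_mul_rpow {t : ℝ} (ht : 1 - t ≠ 0)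
    (hxt : 1 - x * t ≠ 0) :
    HasDerivAt (fun t => -((1 - t) ^ s * (1 - x * t) ^ (-a)))
      (x * (1 - x) * ((1 - t) ^ (s - 1) * (a * t * (1 - x * t) ^ (-a - 1))) +
        (s - a * x) * ((1 - t) ^ (s - 1) * (1 - x * t) ^ (-a))) t := by
  have hleft : HasDerivAt (fun t => (1 - t) ^ s) (-(s * (1 - t) ^ (s - 1))) t :=
    (((hasDerivAt_id t).const_sub 1).rpow_const (.inl ht)).congr_deriv (by simp)
  have hright : HasDerivAt (fun t => (1 - x * t) ^ (-a)) (a * x * (1 - x * t) ^ (-a - 1)) t := by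
    simpa only [mul_comm x] using
      hasDerivAt_one_sub_mul_rpow a (x := t) (t := x) (by rwa [mul_comm])
  have hpow : (1 - t) ^ s = (1 - t) ^ (s - 1) * (1 - t) := by
    rw [← Real.rpow_add_one ht, sub_add_cancel]
  have hpow' : (1 - x * t) ^ (-a) = (1 - x * t) ^ (-a - 1) * (1 - x * t) := by
    rw [← Real.rpow_add_one hxt, sub_add_cancel]
  refine (hleft.mul hright).neg.congr_deriv ?_
  rw [hpow, hpow']
  ring

theorem mul_integral_deriv_add_mul_integral_eq_one (hs : 0 < s) (hx : x < 1) :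
    x * (1 - x) * (∫ t in (0 : ℝ)..1, (1 - t) ^ (s - 1) * (a * t * (1 - x * t) ^ (-a - 1))) +
      (s - a * x) * (∫ t in (0 : ℝ)..1, (1 - t) ^ (s - 1) * (1 - x * t) ^ (-a)) = 1 := by
  have hw : IntervalIntegrable (fun t : ℝ => (1 - t) ^ (s - 1)) volume 0 1 :=
    intervalIntegrable_one_sub_rpow (by linarith)
  have hInt := (intervalIntegrable_mul_one_sub_mul_rpow hw hx (-a)).const_mul (s - a * x)
  have hInt' : IntervalIntegrable
      (fun t => x * (1 - x) * ((1 - t) ^ (s - 1) * (a * t * (1 - x * t) ^ (-a - 1))))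
      volume 0 1 := by
    have hwt := hw.mul_continuousOn (g := fun t => a * t) (by fun_prop)
    simpa only [mul_assoc] using
      (intervalIntegrable_mul_one_sub_mul_rpow hwt hx (-a - 1)).const_mul (x * (1 - x))
  have hcont : ContinuousOn (fun t => -((1 - t) ^ s * (1 - x * t) ^ (-a))) (Icc 0 1) :=
    .neg <| .mul (.rpow_const (by fun_prop) fun _ _ => .inr hs.le)
      (continuousOn_one_sub_const_mul_rpow hx (-a))
  rw [← integral_const_mul, ← integral_const_mul, ← integral_add hInt' hInt,
    integral_eq_sub_of_hasDerivAt_of_le zero_le_one hcont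
      (fun t ht => hasDerivAt_neg_one_sub_rpow_mul_one_sub_mul_rpow (sub_pos.2 ht.2).ne'
        (one_sub_mul_pos hx (Ioo_subset_Icc_self ht)).ne') (hInt'.add hInt)]
  simp [hs.ne']

theorem eulerIntegral_ode (hs : 0 < s) (hx : x < 1) :
    x * (1 - x) * deriv (eulerIntegral a s) x + (s - a * x) * eulerIntegral a s x = s := by
  rw [(hasDerivAt_eulerIntegral hs hx).deriv, eulerIntegral]
  linear_combination s * mul_integral_deriv_add_mul_integral_eq_one (a := a) hs hx

theorem eulerIntegral_zero (hs : 0 < s) : eulerIntegral a s 0 = 1 := by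
  simpa [hs.ne'] using eulerIntegral_ode (a := a) hs zero_lt_one

end EulerIntegral

/-- `Y(0) = 1`, `Y` is differentiable on `(-∞, 1)`, and
`5x(1-x)·Y'(x) + (1-3x)·Y(x) = 1` for every `x < 1`. -/
theorem Yfun_ODE :
    Yfun 0 = 1 ∧ (∀ x : ℝ, x < 1 → DifferentiableAt ℝ Yfun x) ∧
    ∀ x : ℝ, x < 1 → 5 * x * (1 - x) * deriv Yfun x + (1 - 3 * x) * Yfun x = 1 := by
  have hs : (0 : ℝ) < 1 / 5 := by norm_num
  rw [Yfun_eq_eulerIntegral]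
  refine ⟨eulerIntegral_zero hs, fun x hx => (hasDerivAt_eulerIntegral hs hx).differentiableAt,
    fun x hx => ?_⟩
  linear_combination 5 * eulerIntegral_ode (a := 3 / 5) hs hx
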